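/- arXiv:1704.04256 — 3 statements merged into one kernel-verified Lean document; each statement's English description precedes it below -/
import Mathlib

section
/- Let G be a finite group and V an irreducible complex representation of G. Then dim V divides the index [G : Z(G)] of the center of G. -/
/-!
Let `χ` be the character of an irreducible representation `ρ` of degree `n`. The operator
`∑ g, χ(g⁻¹) ρ(g)` is a scalar by Schur's lemma, equal to `|G| / n` because its trace is `|G|`.
If `ρ h` is a scalar, then `χ((gh)⁻¹) ρ(gh) = χ(g⁻¹) ρ(g)`, so for a subgroup `H` acting by scalars
the sum over representatives of `G ⧸ H` is the scalar `[G : H] / n`. As its coefficients are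
algebraic integers, `[G : H] / n` is a rational algebraic integer, hence an integer.
-/

open CategoryTheory Module Representation

theorem dvd_of_isIntegral_natCast_div {K : Type*} [DivisionRing K] [CharZero K] {m n : ℕ}
    (hn : n ≠ 0) (h : IsIntegral ℤ (m / n : K)) : n ∣ m := by
  obtain ⟨a, ha⟩ := h.exists_int_iff_exists_rat.1 ⟨m / n, by push_cast; rfl⟩
  rw [div_eq_iff (Nat.cast_ne_zero.2 hn)] at ha
  exact Int.natCast_dvd_natCast.1 ⟨a, by rw [mul_comm]; exact_mod_cast ha⟩

section Endomorphism

variable {R K V : Type*} [CommRing R] [Field K] [Algebra R K] [AddCommGroup V] [Module K V]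
  [Module R V] [IsScalarTower R K V] {f : End K V}

theorem isIntegral_of_hasEigenvalue (hf : IsIntegral R f) {μ : K} (hμ : f.HasEigenvalue μ) :
    IsIntegral R μ := by
  obtain ⟨p, hp, hpf⟩ := hf
  obtain ⟨v, hv⟩ := hμ.exists_hasEigenvector
  have hpμ := End.aeval_apply_of_hasEigenvector (p := p.map (algebraMap R K)) hv
  rw [Polynomial.aeval_map_algebraMap, Polynomial.aeval_def, hpf, LinearMap.zero_apply,
    Polynomial.eval_map] at hpμ
  exact ⟨p, hp, (smul_eq_zero.1 hpμ.symm).resolve_right hv.2⟩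

theorem isIntegral_trace [FiniteDimensional K V] (hf : IsIntegral R f) :
    IsIntegral R (LinearMap.trace K V f) := by
  let L := AlgebraicClosure K
  have hfL : IsIntegral R (f.baseChange L) :=
    hf.map ((End.baseChangeHom K L V).restrictScalars R)
  rw [← isIntegral_algebraMap_iff (algebraMap K L).injective, ← LinearMap.trace_baseChange,
    End.trace_eq_sum_roots_charpoly_of_splits (IsAlgClosed.splits _)]
  exact .multiset_sum fun μ hμ ↦ isIntegral_of_hasEigenvalue hfL <|
    (End.hasEigenvalue_iff_isRoot_charpoly _ μ).2 (Polynomial.isRoot_of_mem_roots hμ)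

end Endomorphism

theorem isIntegral_character {K G V : Type*} [Field K] [Group G] [Finite G] [AddCommGroup V]
    [Module K V] [FiniteDimensional K V] (ρ : Representation K G V) (g : G) :
    IsIntegral ℤ (ρ.character g) :=
  isIntegral_trace <| .of_pow (Nat.card_pos (α := G)) <| by
    rw [← map_pow, pow_card_eq_one', map_one]
    exact isIntegral_one

theorem isIntegral_sum_smul_representation {R K G V ι : Type*} [CommRing R] [CommRing K]
    [Algebra R K] [Monoid G] [Finite G] [AddCommGroup V] [Module K V] [Module R V]
    [IsScalarTower R K V] (ρ : Representation K G V) (s : Finset ι) {a : ι → K} (x : ι → G)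
    (ha : ∀ i ∈ s, IsIntegral R (a i)) : IsIntegral R (∑ i ∈ s, a i • ρ (x i)) := by
  let O := integralClosure R K
  let φ : MonoidAlgebra O G →ₐ[O] End K V := MonoidAlgebra.lift O _ G ρ
  obtain ⟨y, hy⟩ : ∑ i ∈ s, a i • ρ (x i) ∈ φ.range :=
    sum_mem fun i hi ↦ ⟨.single (x i) ⟨a i, ha i hi⟩, MonoidAlgebra.lift_single ..⟩
  have hint : IsIntegral O (φ y) := (Algebra.IsIntegral.isIntegral (R := O) y).map φ
  rw [← hy]
  exact isIntegral_trans _ hint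

theorem sum_eq_card_nsmul_sum_of_isComplement {G M : Type*} [Group G] [Fintype G]
    [AddCommMonoid M] {H : Subgroup G} {S : Set G} [Fintype S] (hS : Subgroup.IsComplement S H)
    {f : G → M} (hf : ∀ g, ∀ h ∈ H, f (g * h) = f g) :
    ∑ g, f g = Nat.card H • ∑ s : S, f s := by
  have := Fintype.ofFinite H
  calc ∑ g, f g = ∑ s : S, ∑ h : H, f (s * h) := by
        rw [← Fintype.sum_prod_type']
        exact (hS.sum_comp f).symm
    _ = Nat.card H • ∑ s : S, f s := by
        simp [hf, Finset.smul_sum]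

section ScalarOperators

theorem exists_eq_algebraMap_of_commute {k G V : Type*} [Field k] [IsAlgClosed k] [Monoid G]
    [AddCommGroup V] [Module k V] [FiniteDimensional k V] (ρ : Representation k G V)
    [ρ.IsIrreducible] {T : End k V} (hT : ∀ g, Commute T (ρ g)) :
    ∃ c, T = algebraMap k (End k V) c := by
  obtain ⟨c, hc⟩ := (IsIrreducible.algebraMap_intertwiningMap_bijective_of_isAlgClosed
    (ρ := ρ)).2 ⟨T, hT⟩
  exact ⟨c, congrArg IntertwiningMap.toLinearMap hc.symm⟩

theorem commute_sum_smul_of_conj_invariant {R G V : Type*} [CommRing R] [Group G] [Fintype G]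
    [AddCommGroup V] [Module R V] (ρ : Representation R G V) {f : G → R}
    (hf : ∀ g h, f (h * g * h⁻¹) = f g) (h : G) : Commute (∑ g, f g • ρ g) (ρ h) := by
  calc (∑ g, f g • ρ g) * ρ h
      = ∑ g, f (h * g * h⁻¹) • ρ (h * g * h⁻¹) * ρ h := by
        rw [Finset.sum_mul]
        exact ((MulAut.conj h).toEquiv.sum_comp fun g ↦ f g • ρ g * ρ h).symm
    _ = ρ h * ∑ g, f g • ρ g := by
        simp only [hf, smul_mul_assoc, mul_smul_comm, ← map_mul, inv_mul_cancel_right,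
          Finset.mul_sum]

variable {k G V : Type*} [Field k] [Group G] [AddCommGroup V] [Module k V]
  (ρ : Representation k G V)

theorem char_inv_smul_mul_of_eq_algebraMap {h : G} {c : k} (hc : ρ h = algebraMap k (End k V) c)
    (g : G) : ρ.character (g * h)⁻¹ • ρ (g * h) = ρ.character g⁻¹ • ρ g := by
  have hchar : ρ.character g⁻¹ = c * ρ.character (g * h)⁻¹ := by
    rw [show g⁻¹ = h * (g * h)⁻¹ by group, character, map_mul, hc, ← Algebra.smul_def, map_smul,
      smul_eq_mul, character]
  rw [hchar, map_mul, hc, ← Algebra.commutes, ← Algebra.smul_def, smul_smul, mul_comm]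

variable [IsAlgClosed k] [FiniteDimensional k V] [ρ.IsIrreducible]

theorem sum_char_mul_char_inv [Fintype G] [Invertible (Nat.card G : k)] :
    ∑ g, ρ.character g * ρ.character g⁻¹ = Nat.card G := by
  classical
  have hnorm := char_orthonormal ρ ρ
  rw [if_pos ⟨.refl ρ⟩] at hnorm
  exact ((inv_mul_eq_one₀ (Invertible.ne_zero _)).1 hnorm).symm

theorem sum_char_inv_smul [Fintype G] [Invertible (Nat.card G : k)] :
    ∑ g, ρ.character g⁻¹ • ρ g = algebraMap k (End k V) (Nat.card G / finrank k V) := by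
  have hconj (g h : G) : ρ.character (h * g * h⁻¹)⁻¹ = ρ.character g⁻¹ := by
    rw [show (h * g * h⁻¹)⁻¹ = h * g⁻¹ * h⁻¹ by group, char_conj]
  obtain ⟨c, hc⟩ := exists_eq_algebraMap_of_commute ρ <|
    commute_sum_smul_of_conj_invariant ρ (f := fun g ↦ ρ.character g⁻¹) hconj
  have htrace : c * finrank k V = Nat.card G := by
    calc c * finrank k V = LinearMap.trace k V (∑ g, ρ.character g⁻¹ • ρ g) := by
          rw [hc, Algebra.algebraMap_eq_smul_one, map_smul, LinearMap.trace_one, smul_eq_mul]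
      _ = ∑ g, ρ.character g * ρ.character g⁻¹ := by
          simp only [map_sum, map_smul, smul_eq_mul, mul_comm, character]
      _ = Nat.card G := sum_char_mul_char_inv ρ
  have hdim : (finrank k V : k) ≠ 0 :=
    right_ne_zero_of_mul (htrace.trans_ne (Invertible.ne_zero _))
  rw [hc, eq_div_of_mul_eq hdim htrace]

theorem sum_isComplement_char_inv_smul [Finite G] [Invertible (Nat.card G : k)]
    {H : Subgroup G} (hH : ∀ h ∈ H, ∀ g, Commute (ρ h) (ρ g)) {S : Set G} [Fintype S]
    (hS : Subgroup.IsComplement S H) :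
    ∑ s : S, ρ.character (s : G)⁻¹ • ρ s = algebraMap k (End k V) (H.index / finrank k V) := by
  have := Fintype.ofFinite G
  have hinv (g h : G) (hh : h ∈ H) :
      ρ.character (g * h)⁻¹ • ρ (g * h) = ρ.character g⁻¹ • ρ g := by
    obtain ⟨c, hc⟩ := exists_eq_algebraMap_of_commute ρ (hH h hh)
    exact char_inv_smul_mul_of_eq_algebraMap ρ hc g
  have hcard : (Nat.card G : k) = Nat.card H * H.index := by
    rw [← Nat.cast_mul, H.card_mul_index]
  have hcard_ne_zero : (Nat.card H : k) ≠ 0 :=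
    left_ne_zero_of_mul (hcard.symm.trans_ne (Invertible.ne_zero _))
  refine smul_right_injective (End k V) hcard_ne_zero ?_
  calc (Nat.card H : k) • ∑ s : S, ρ.character (s : G)⁻¹ • ρ s
      = ∑ g, ρ.character g⁻¹ • ρ g := by
        rw [Nat.cast_smul_eq_nsmul, sum_eq_card_nsmul_sum_of_isComplement hS hinv]
    _ = algebraMap k (End k V) (Nat.card G / finrank k V) := sum_char_inv_smul ρ
    _ = (Nat.card H : k) • algebraMap k (End k V) (H.index / finrank k V) := by
        rw [hcard, mul_div_assoc, map_mul, Algebra.smul_def]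

end ScalarOperators

theorem isIrreducible_of_simple {k G : Type*} [Field k] [Monoid G] (V : FDRep k G) [Simple V] :
    IsIrreducible V.ρ where
  exists_pair_ne := by
    refine ⟨⊥, ⊤, fun h ↦ id_nonzero V ?_⟩
    ext v
    have hv : v ∈ (⊤ : Subrepresentation V.ρ) := Submodule.mem_top
    rwa [← h] at hv
  eq_bot_or_eq_top W := by
    let ι : FDRep.of W.toRepresentation ⟶ V :=
      ⟨FGModuleCat.ofHom W.toSubmodule.subtype, fun _ ↦ rfl⟩
    have : Mono ι := ConcreteCategory.mono_of_injective ι Subtype.val_injective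
    rcases eq_or_ne ι 0 with hι | hι
    · left
      refine eq_bot_iff.2 fun v hv ↦ ?_
      exact congrArg (fun j ↦ j ⟨v, hv⟩) hι
    · right
      have := isIso_of_mono_of_nonzero hι
      refine eq_top_iff.2 fun v _ ↦ ?_
      obtain ⟨w, rfl⟩ := (ConcreteCategory.bijective_of_isIso ι).2 v
      exact w.2

theorem stmt_8_general {k G V : Type*} [Field k] [IsAlgClosed k] [CharZero k] [Group G] [Finite G]
    [AddCommGroup V] [Module k V] [FiniteDimensional k V] (ρ : Representation k G V)
    [ρ.IsIrreducible] (H : Subgroup G) (hH : ∀ h ∈ H, ∀ g, Commute (ρ h) (ρ g)) :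
    finrank k V ∣ H.index := by
  have := invertibleOfNonzero (Nat.cast_ne_zero.2 Nat.card_pos.ne' : (Nat.card G : k) ≠ 0)
  have : Nontrivial V := IsSimpleModule.nontrivial (MonoidAlgebra k G) ρ.asModule
  obtain ⟨S, hS, -⟩ := H.exists_isComplement_left 1
  have := Fintype.ofFinite S
  have hint : IsIntegral ℤ (∑ s : S, ρ.character (s : G)⁻¹ • ρ s) :=
    isIntegral_sum_smul_representation ρ _ _ fun s _ ↦ isIntegral_character ρ (s : G)⁻¹
  rw [sum_isComplement_char_inv_smul ρ hH hS,
    isIntegral_algebraMap_iff (algebraMap k (End k V)).injective] at hint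
  exact dvd_of_isIntegral_natCast_div finrank_pos.ne' hint

/-- Schur's theorem: the dimension of an irreducible complex representation of a finite
group `G` divides the index of the center of `G`. -/
theorem stmt_8 (G : Type) [Group G] [Fintype G] (V : FDRep ℂ G)
    [CategoryTheory.Simple V] :
    Module.finrank ℂ V ∣ (Subgroup.center G).index := by
  have := isIrreducible_of_simple V
  exact stmt_8_general V.ρ _ fun z hz g ↦ Commute.map (Subgroup.mem_center_iff.1 hz g).symm V.ρ
end

section
/- Let G be a finite group, V a faithful irreducible complex representation of G, and n ≥ 1. Let N_n = {(z₁,…,z_n) ∈ Z(G)^n : z₁⋯z_n = 1}. Then V^{⊗n} descends to an irreducible representation of G^n/N_n, and hence (dim V)^n divides |G|^n / |Z(G)|^{n-1}. -/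
open scoped TensorProduct

/-!
By Schur's lemma a central element `z` acts on `V` by a scalar `ω z`, so a tuple of central elements
acts on `V^{⊗n}` by `∏ ω (zᵢ) = ω (∏ zᵢ)`, which is `1` on `N_n`. By Burnside's theorem an action is
irreducible exactly when its operators span all endomorphisms; this spanning condition passes to
outer tensor products because elementary tensors of endomorphisms span `End (V^{⊗n})`, and to
quotients because it depends only on the set of operators. Frobenius divisibility for `G^n / N_n`
then gives the claim.
-/

open Representation

section Irreducible

theorem asAlgebraHom_mem_span_range {k G V : Type*} [CommSemiring k] [Monoid G] [AddCommMonoid V]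
    [Module k V] (ρ : Representation k G V) (r : MonoidAlgebra k G) :
    ρ.asAlgebraHom r ∈ Submodule.span k (Set.range ρ) := by
  induction r using MonoidAlgebra.induction_linear with
  | zero => simp only [map_zero, Submodule.zero_mem]
  | add x y hx hy => simpa only [map_add] using Submodule.add_mem _ hx hy
  | single g a =>
    rw [asAlgebraHom_single]
    exact Submodule.smul_mem _ _ (Submodule.subset_span ⟨g, rfl⟩)

variable {k G V : Type*} [Field k] [AddCommGroup V] [Module k V]

section Monoid

variable [Monoid G] (ρ : Representation k G V)

theorem nontrivial_of_isIrreducible [ρ.IsIrreducible] : Nontrivial V :=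
  IsSimpleModule.nontrivial (MonoidAlgebra k G) ρ.asModule

theorem isIrreducible_of_span_range_eq_top [Nontrivial V]
    (hρ : Submodule.span k (Set.range ρ) = ⊤) : ρ.IsIrreducible := by
  have stable (W : Subrepresentation ρ) {w : V} (hw : w ∈ W.toSubmodule) (T : Module.End k V) :
      T w ∈ W.toSubmodule := by
    induction hρ.ge (Submodule.mem_top (x := T)) using Submodule.span_induction with
    | mem _ h => obtain ⟨g, rfl⟩ := h; exact W.apply_mem_toSubmodule g hw
    | zero => exact W.toSubmodule.zero_mem
    | add _ _ _ _ hS hT => exact W.toSubmodule.add_mem hS hT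
    | smul a _ _ hT => exact W.toSubmodule.smul_mem a hT
  have : Nontrivial (Subrepresentation ρ) :=
    ⟨⊥, ⊤, fun h => bot_ne_top (α := Submodule k V) (congrArg Subrepresentation.toSubmodule h)⟩
  refine ⟨fun W => or_iff_not_imp_left.2 fun hW => Subrepresentation.toSubmodule_injective ?_⟩
  obtain ⟨w, hwW, hw⟩ := W.toSubmodule.exists_mem_ne_zero_of_ne_bot fun h =>
    hW (Subrepresentation.toSubmodule_injective h)
  refine eq_top_iff.2 fun v _ => ?_
  obtain ⟨T, rfl⟩ := IsSimpleModule.toSpanSingleton_surjective (Module.End k V) hw v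
  exact stable W hwW T

variable [IsAlgClosed k] [FiniteDimensional k V] [ρ.IsIrreducible]

theorem exists_eq_smul_one_of_forall_commute (T : Module.End k V) (hT : ∀ g, Commute T (ρ g)) :
    ∃ c : k, T = c • 1 := by
  let f : IntertwiningMap ρ ρ := ⟨T, fun g => hT g⟩
  obtain ⟨c, hc⟩ := (IsIrreducible.algebraMap_intertwiningMap_bijective_of_isAlgClosed (ρ := ρ)).2 f
  exact ⟨c, LinearMap.ext fun v => (DFunLike.congr_fun hc v).symm⟩

theorem span_range_eq_top_of_isIrreducible : Submodule.span k (Set.range ρ) = ⊤ := by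
  refine eq_top_iff.2 fun T _ => ?_
  let A := MonoidAlgebra k G
  -- By Schur, `T` commutes with every `A`-endomorphism, so the density theorem applies to it.
  let T' : Module.End (Module.End A ρ.asModule) ρ.asModule :=
    { toFun := fun v => T v
      map_add' := fun v w => T.map_add v w
      map_smul' := fun φ v => by
        obtain ⟨c, rfl⟩ := (IsSimpleModule.algebraMap_end_bijective_of_isAlgClosed (A := A)
          (V := ρ.asModule) k).2 φ
        exact T.map_smul c v }
  have : Module.Finite k ρ.asModule := inferInstanceAs (Module.Finite k V)
  have : Module.Finite (Module.End A ρ.asModule) ρ.asModule :=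
    .of_restrictScalars_finite k _ _
  obtain ⟨r, hr⟩ := Module.Finite.toModuleEnd_moduleEnd_surjective T'
  have hT : T = ρ.asAlgebraHom r := LinearMap.ext fun v => (DFunLike.congr_fun hr v).symm
  exact hT ▸ asAlgebraHom_mem_span_range ρ r

end Monoid

section Group

open scoped IsMulCommutative

variable [Group G] [IsAlgClosed k] [FiniteDimensional k V] (ρ : Representation k G V)
  [ρ.IsIrreducible]

theorem exists_centralCharacter :
    ∃ ω : Subgroup.center G →* k, ∀ z : Subgroup.center G, ρ z = ω z • 1 := by
  have : Nontrivial V := nontrivial_of_isIrreducible ρ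
  have scalar (z : Subgroup.center G) : ∃ c : k, ρ z = algebraMap k (Module.End k V) c := by
    simp only [Algebra.algebraMap_eq_smul_one]
    exact exists_eq_smul_one_of_forall_commute ρ _ fun g =>
      Commute.map (Subgroup.mem_center_iff.1 z.2 g).symm ρ
  choose ω hω using scalar
  have algebraMap_inj := FaithfulSMul.algebraMap_injective k (Module.End k V)
  refine ⟨⟨⟨ω, algebraMap_inj ?_⟩, fun y z => algebraMap_inj ?_⟩, fun z => ?_⟩
  · rw [← hω, OneMemClass.coe_one, map_one, map_one]
  · rw [← hω, Subgroup.coe_mul, map_mul, map_mul, hω, hω]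
  · rw [hω, Algebra.algebraMap_eq_smul_one]; rfl

end Group

end Irreducible

section ClassFunction

variable {k G V : Type*} [CommRing k] [AddCommGroup V] [Module k V]

theorem isIntegral_sum_smul {R : Type*} [CommRing R] [Algebra R k] [Module R V]
    [IsScalarTower R k V] [Monoid G] [Fintype G] (ρ : Representation k G V) {φ : G → k}
    (hφ : ∀ g, IsIntegral R (φ g)) : IsIntegral R (∑ g, φ g • ρ g) := by
  let A := integralClosure R k
  let φA : MonoidAlgebra A G := ∑ g, MonoidAlgebra.single g ⟨φ g, hφ g⟩
  have hφA : IsIntegral A φA := Algebra.IsIntegral.isIntegral φA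
  have map_φA : MonoidAlgebra.lift A (Module.End k V) G ρ φA = ∑ g, φ g • ρ g := by
    simp only [φA, map_sum, MonoidAlgebra.lift_single]
    rfl
  exact isIntegral_trans _ (map_φA ▸ hφA.map (MonoidAlgebra.lift A (Module.End k V) G ρ))

theorem commute_sum_smul_of_conj_eq [Group G] [Fintype G] (ρ : Representation k G V)
    {φ : G → k} (hφ : ∀ g h, φ (h * g * h⁻¹) = φ g) (h : G) :
    Commute (∑ g, φ g • ρ g) (ρ h) := by
  simp only [Commute, SemiconjBy, Finset.sum_mul, Finset.mul_sum, smul_mul_assoc, mul_smul_comm,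
    ← map_mul]
  refine Fintype.sum_equiv (MulAut.conj h⁻¹).toEquiv _ _ fun g => ?_
  have hφg : φ (h⁻¹ * (g * h)) = φ g := by simpa only [inv_inv, mul_assoc] using hφ g h⁻¹
  simp only [MulEquiv.toEquiv_eq_coe, EquivLike.coe_coe, MulAut.conj_apply, inv_inv, hφg,
    mul_assoc, mul_inv_cancel_left]

end ClassFunction

section FrobeniusDivisibility

theorem isIntegral_trace_of_isIntegral {R k V : Type*} [CommRing R] [Field k] [IsAlgClosed k]
    [Algebra R k] [AddCommGroup V] [Module k V] [Module R V] [IsScalarTower R k V]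
    [FiniteDimensional k V] {f : Module.End k V} (hf : IsIntegral R f) :
    IsIntegral R (LinearMap.trace k V f) := by
  rw [Module.End.trace_eq_sum_roots_charpoly_of_splits (IsAlgClosed.splits _)]
  refine IsIntegral.multiset_sum fun μ hμ => ?_
  have hμ_root := Polynomial.isRoot_of_mem_roots hμ
  obtain ⟨v, hv⟩ :=
    ((Module.End.hasEigenvalue_iff_isRoot_charpoly f μ).2 hμ_root).exists_hasEigenvector
  obtain ⟨p, hp_monic, hp⟩ := hf
  refine ⟨p, hp_monic, ?_⟩
  have h := Module.End.aeval_apply_of_hasEigenvector (p := p.map (algebraMap R k)) hv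
  rw [Polynomial.aeval_map_algebraMap, Polynomial.aeval_def, hp, LinearMap.zero_apply,
    Polynomial.eval_map] at h
  exact (smul_eq_zero.1 h.symm).resolve_right hv.2

variable {k G V : Type*} [Field k] [AddCommGroup V] [Module k V] [Group G]
  (ρ : Representation k G V)

theorem isIntegral_character_s11 [Finite G] [IsAlgClosed k] [FiniteDimensional k V] (g : G) :
    IsIntegral ℤ (ρ.character g) := by
  refine isIntegral_trace_of_isIntegral (IsIntegral.of_pow (Nat.card_pos (α := G)) ?_)
  rw [← map_pow, pow_card_eq_one', map_one]
  exact isIntegral_one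

variable [IsAlgClosed k] [CharZero k] [FiniteDimensional k V]

theorem sum_character_inv_smul_eq [ρ.IsIrreducible] [Fintype G] :
    ∑ g, ρ.character g⁻¹ • ρ g = (Nat.card G / Module.finrank k V : k) • 1 := by
  have : Nontrivial V := nontrivial_of_isIrreducible ρ
  have card_ne_zero : (Nat.card G : k) ≠ 0 := Nat.cast_ne_zero.2 Nat.card_pos.ne'
  have finrank_ne_zero : (Module.finrank k V : k) ≠ 0 := Nat.cast_ne_zero.2 Module.finrank_pos.ne'
  have : Invertible (Nat.card G : k) := invertibleOfNonzero card_ne_zero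
  obtain ⟨c, hc⟩ := exists_eq_smul_one_of_forall_commute ρ _
    (commute_sum_smul_of_conj_eq ρ (φ := fun g => ρ.character g⁻¹) fun g h => by
      simpa only [mul_inv_rev, inv_inv, mul_assoc] using ρ.char_conj g⁻¹ h)
  have orthogonality : ∑ g, ρ.character g * ρ.character g⁻¹ = Nat.card G := by
    have h := card_inv_mul_sum_char_mul_char_eq_finrank ρ ρ
    rwa [IsIrreducible.finrank_intertwiningMap_self, inv_mul_eq_iff_eq_mul₀ card_ne_zero,
      Nat.cast_one, mul_one] at h
  have trace_eq : (Nat.card G : k) = c * Module.finrank k V := by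
    have trace_sum := congrArg (LinearMap.trace k V) hc
    simp only [map_sum, map_smul, LinearMap.trace_one, smul_eq_mul] at trace_sum
    rw [← orthogonality, ← trace_sum]
    exact Finset.sum_congr rfl fun g _ => mul_comm _ _
  rw [hc, trace_eq, mul_div_cancel_right₀ _ finrank_ne_zero]

theorem finrank_dvd_card_of_isIrreducible [ρ.IsIrreducible] [Finite G] :
    Module.finrank k V ∣ Nat.card G := by
  have := Fintype.ofFinite G
  have : Nontrivial V := nontrivial_of_isIrreducible ρ
  have finrank_ne_zero : (Module.finrank k V : k) ≠ 0 := Nat.cast_ne_zero.2 Module.finrank_pos.ne'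
  have hint : IsIntegral ℤ (Nat.card G / Module.finrank k V : k) := by
    have h := isIntegral_sum_smul ρ fun g => isIntegral_character_s11 ρ g⁻¹
    rwa [sum_character_inv_smul_eq, ← Algebra.algebraMap_eq_smul_one,
      isIntegral_algebraMap_iff (FaithfulSMul.algebraMap_injective k (Module.End k V))] at h
  obtain ⟨m, hm⟩ := hint.exists_int_iff_exists_rat.1
    ⟨(Nat.card G : ℚ) / Module.finrank k V, by push_cast; rfl⟩
  rw [div_eq_iff finrank_ne_zero, mul_comm] at hm
  exact Int.natCast_dvd_natCast.1 ⟨m, by exact_mod_cast hm⟩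

end FrobeniusDivisibility

section TensorPower

variable {ι : Type*} {M : ι → Type*}

section CommRing

variable {R : Type*} [CommRing R] [∀ i, AddCommGroup (M i)] [∀ i, Module R (M i)]
  [∀ i, Module.Free R (M i)] [∀ i, Module.Finite R (M i)]

theorem finrank_piTensorProduct [Nontrivial R] [Fintype ι] :
    Module.finrank R (⨂[R] i, M i) = ∏ i, Module.finrank R (M i) := by
  classical
  rw [Module.finrank_eq_card_basis (Basis.piTensorProduct fun i => Module.Free.chooseBasis R (M i)),
    Fintype.card_pi]
  simp only [Module.finrank_eq_card_chooseBasisIndex]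

theorem span_range_piTensorProduct_map_eq_top [Finite ι] :
    Submodule.span R (Set.range fun φ : Π i, Module.End R (M i) => PiTensorProduct.map φ) = ⊤ := by
  classical
  have := Fintype.ofFinite ι
  let b (i : ι) := Module.Free.chooseBasis R (M i)
  let B := Basis.piTensorProduct b
  -- A matrix unit in the product basis is the tensor product of matrix units.
  have end_eq_map (p q) : B.end (p, q) = PiTensorProduct.map fun i => (b i).end (p i, q i) := by
    refine B.ext fun r => ?_
    rw [Module.Basis.end_apply_apply]
    simp only [B, Basis.piTensorProduct_apply, PiTensorProduct.map_tprod,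
      Module.Basis.end_apply_apply]
    split_ifs with hqr
    · simp only [congrFun hqr, if_true]
    · obtain ⟨i, hi⟩ := Function.ne_iff.1 hqr
      exact ((PiTensorProduct.tprod R).map_coord_zero i (if_neg hi)).symm
  rw [eq_top_iff, ← B.end.span_eq, Submodule.span_le]
  rintro _ ⟨⟨p, q⟩, rfl⟩
  exact Submodule.subset_span ⟨_, (end_eq_map p q).symm⟩

end CommRing

section Outer

variable {k : Type*} [CommRing k] {G : ι → Type*} [∀ i, Monoid (G i)] [∀ i, AddCommGroup (M i)]
  [∀ i, Module k (M i)]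

/-- The outer tensor product of a family of representations, on which the product of the monoids
acts factorwise. -/
noncomputable def outerTensor (ρ : Π i, Representation k (G i) (M i)) :
    Representation k (Π i, G i) (⨂[k] i, M i) :=
  PiTensorProduct.mapMonoidHom.comp (MonoidHom.piMap ρ)

theorem outerTensor_apply (ρ : Π i, Representation k (G i) (M i)) (g : Π i, G i) :
    outerTensor ρ g = PiTensorProduct.map fun i => ρ i (g i) :=
  rfl

theorem span_range_outerTensor_eq_top [Finite ι] [∀ i, Module.Free k (M i)]
    [∀ i, Module.Finite k (M i)] {ρ : Π i, Representation k (G i) (M i)}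
    (hρ : ∀ i, Submodule.span k (Set.range (ρ i)) = ⊤) :
    Submodule.span k (Set.range (outerTensor ρ)) = ⊤ := by
  set S := Submodule.span k (Set.range (outerTensor ρ))
  have mkQ_map_eq_zero :
      S.mkQ.compMultilinearMap (PiTensorProduct.mapMultilinear k M M) = 0 :=
    MultilinearMap.ext_of_span_eq_top (g := fun i => ρ i) hρ fun g =>
      (Submodule.Quotient.mk_eq_zero S).2 (Submodule.subset_span ⟨g, rfl⟩)
  rw [eq_top_iff, ← span_range_piTensorProduct_map_eq_top, Submodule.span_le]
  rintro _ ⟨φ, rfl⟩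
  exact (Submodule.Quotient.mk_eq_zero S).1 (congrArg (fun m => m φ) mkQ_map_eq_zero)

end Outer

end TensorPower

section CentralProdOne

open scoped IsMulCommutative

variable (G : Type*) [Group G] (ι : Type*) [Fintype ι]

/-- The paper's `N_n`: the families of central elements with product one, as a subgroup of `G^ι`.
The product is taken inside the commutative group `Z(G)`, so that no order on `ι` is needed. -/
def centralProdOne : Subgroup (ι → G) :=
  (∏ i, Pi.evalMonoidHom (fun _ : ι => Subgroup.center G) i).ker.map
    ((Subgroup.center G).subtype.compLeft ι)

variable {G ι} in
theorem mem_centralProdOne {f : ι → G} :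
    f ∈ centralProdOne G ι ↔
      ∃ z : ι → Subgroup.center G, ∏ i, z i = 1 ∧ (fun i => (z i : G)) = f := by
  simp only [centralProdOne, Subgroup.mem_map, MonoidHom.mem_ker, MonoidHom.finsetProd_apply]
  rfl

theorem coe_centralProdOne_fin (n : ℕ) :
    (centralProdOne G (Fin n) : Set (Fin n → G)) =
      {f | (∀ i, f i ∈ Subgroup.center G) ∧ (List.ofFn f).prod = 1} := by
  have coe_prod (z : Fin n → Subgroup.center G) :
      ((∏ i, z i : Subgroup.center G) : G) = (List.ofFn fun i => (z i : G)).prod := by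
    rw [← List.prod_ofFn, ← Subgroup.coe_subtype, map_list_prod, List.map_ofFn]
    rfl
  ext f
  rw [SetLike.mem_coe, mem_centralProdOne]
  constructor
  · rintro ⟨z, hz, rfl⟩
    exact ⟨fun i => (z i).2, by rw [← coe_prod, hz, Subgroup.coe_one]⟩
  · rintro ⟨hf, hprod⟩
    exact ⟨fun i => ⟨f i, hf i⟩, Subtype.ext ((coe_prod _).trans hprod), rfl⟩

instance normal_centralProdOne : (centralProdOne G ι).Normal where
  conj_mem f hf g := by
    obtain ⟨z, _, rfl⟩ := mem_centralProdOne.1 hf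
    convert hf using 1
    funext i
    exact mul_inv_eq_iff_eq_mul.2 (Subgroup.mem_center_iff.1 (z i).2 (g i))

theorem card_centralProdOne_mul_card_center [Nonempty ι] :
    Nat.card (centralProdOne G ι) * Nat.card (Subgroup.center G) =
      Nat.card (Subgroup.center G) ^ Fintype.card ι := by
  classical
  let prod := ∏ i, Pi.evalMonoidHom (fun _ : ι => Subgroup.center G) i
  have prod_surjective : Function.Surjective prod := fun z =>
    ⟨Pi.mulSingle (Classical.arbitrary ι) z, by
      simpa only [prod, MonoidHom.finsetProd_apply] using! Fintype.prod_pi_mulSingle' _ z⟩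
  have card_ker : Nat.card (centralProdOne G ι) = Nat.card prod.ker :=
    Subgroup.card_map_of_injective fun _ _ h => funext fun i => Subtype.ext (congrFun h i)
  have h := prod.ker.card_mul_index
  rwa [Subgroup.index_ker, MonoidHom.range_eq_top.2 prod_surjective, Subgroup.card_top,
    Nat.card_fun, Nat.card_eq_fintype_card (α := ι), ← card_ker] at h

theorem card_quotient_centralProdOne [Finite G] [Nonempty ι] :
    Nat.card ((ι → G) ⧸ centralProdOne G ι) =
      Nat.card G ^ Fintype.card ι / Nat.card (Subgroup.center G) ^ (Fintype.card ι - 1) := by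
  have card_N : Nat.card (centralProdOne G ι) =
      Nat.card (Subgroup.center G) ^ (Fintype.card ι - 1) := by
    refine Nat.eq_of_mul_eq_mul_right (Nat.card_pos (α := Subgroup.center G)) ?_
    rw [card_centralProdOne_mul_card_center, pow_sub_one_mul Fintype.card_ne_zero]
  have h := (centralProdOne G ι).card_eq_card_quotient_mul_card_subgroup
  rw [Nat.card_fun, Nat.card_eq_fintype_card (α := ι), card_N] at h
  rw [h, Nat.mul_div_cancel _ (pow_pos Nat.card_pos _)]

variable {G} {k V : Type*} [Field k] [IsAlgClosed k] [AddCommGroup V] [Module k V]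
  [FiniteDimensional k V] (ρ : Representation k G V) [ρ.IsIrreducible]

theorem outerTensor_eq_one_of_mem_centralProdOne {f : ι → G} (hf : f ∈ centralProdOne G ι) :
    outerTensor (fun _ : ι => ρ) f = 1 := by
  obtain ⟨z, hz, rfl⟩ := mem_centralProdOne.1 hf
  obtain ⟨ω, hω⟩ := exists_centralCharacter ρ
  ext v
  simp [outerTensor_apply, hω, MultilinearMap.map_smul_univ, ← map_prod, hz]

/-- The representation of `G^ι / N` on `V^{⊗ι}` induced by the factorwise action of `G^ι`. -/
noncomputable def quotientTensorPower :
    Representation k ((ι → G) ⧸ centralProdOne G ι) (⨂[k] _ : ι, V) :=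
  QuotientGroup.lift (centralProdOne G ι) (outerTensor fun _ => ρ) fun _ =>
    outerTensor_eq_one_of_mem_centralProdOne ι ρ

theorem quotientTensorPower_mk (f : ι → G) :
    quotientTensorPower ι ρ (QuotientGroup.mk f) = PiTensorProduct.map fun i => ρ (f i) :=
  rfl

theorem isIrreducible_quotientTensorPower : (quotientTensorPower ι ρ).IsIrreducible := by
  have : Nontrivial V := nontrivial_of_isIrreducible ρ
  have : Nontrivial (⨂[k] _ : ι, V) := Module.nontrivial_of_finrank_pos (R := k) <| by
    rw [finrank_piTensorProduct]
    exact Finset.prod_pos fun _ _ => Module.finrank_pos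
  have range_eq : Set.range (quotientTensorPower ι ρ) = Set.range (outerTensor fun _ : ι => ρ) :=
    (QuotientGroup.mk_surjective.range_comp (quotientTensorPower ι ρ)).symm
  refine isIrreducible_of_span_range_eq_top _ (range_eq ▸ ?_)
  exact span_range_outerTensor_eq_top fun _ => span_range_eq_top_of_isIrreducible ρ

end CentralProdOne

theorem stmt_11_general (k G V : Type*) [Field k] [IsAlgClosed k] [CharZero k] [Group G] [Fintype G]
    [AddCommGroup V] [Module k V] [FiniteDimensional k V]
    (ρ : Representation k G V)
    (hirr : IsSimpleModule (MonoidAlgebra k G) ρ.asModule)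
    (n : ℕ) (hn : 0 < n) :
    ∃ N : Subgroup (Fin n → G),
      (N : Set (Fin n → G)) =
          {f | (∀ i, f i ∈ Subgroup.center G) ∧ (List.ofFn f).prod = 1} ∧
      ∃ _hN : N.Normal,
        (∃ σ : Representation k ((Fin n → G) ⧸ N) (⨂[k] _ : Fin n, V),
          (∀ f : Fin n → G,
            σ (QuotientGroup.mk f) = PiTensorProduct.map (fun i => ρ (f i))) ∧
          IsSimpleModule (MonoidAlgebra k ((Fin n → G) ⧸ N)) σ.asModule) ∧
        (Module.finrank k V) ^ n ∣
          Fintype.card G ^ n / Nat.card (Subgroup.center G) ^ (n - 1) := by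
  have : ρ.IsIrreducible := ρ.irreducible_iff_isSimpleModule_asModule.2 hirr
  have : Nonempty (Fin n) := ⟨⟨0, hn⟩⟩
  let σ := quotientTensorPower (Fin n) ρ
  have hσ : σ.IsIrreducible := isIrreducible_quotientTensorPower (Fin n) ρ
  refine ⟨centralProdOne G (Fin n), coe_centralProdOne_fin G n, inferInstance,
    ⟨σ, quotientTensorPower_mk (Fin n) ρ, σ.irreducible_iff_isSimpleModule_asModule.1 hσ⟩, ?_⟩
  have frobenius := finrank_dvd_card_of_isIrreducible σ
  rwa [finrank_piTensorProduct, Finset.prod_const, Finset.card_univ, card_quotient_centralProdOne,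
    Fintype.card_fin, Nat.card_eq_fintype_card (α := G)] at frobenius

/-- Let `V` be a faithful irreducible complex representation of a finite group `G` and
`N_n = {(z₁,…,zₙ) ∈ Z(G)^n : z₁⋯zₙ = 1}`. Then `V^{⊗n}` descends to an irreducible
representation of `G^n / N_n`, and hence `(dim V)^n ∣ |G|^n / |Z(G)|^{n-1}`. -/
theorem stmt_11 (G V : Type*) [Group G] [Fintype G]
    [AddCommGroup V] [Module ℂ V] [FiniteDimensional ℂ V]
    (ρ : Representation ℂ G V)
    (hfaith : Function.Injective ρ)
    (hirr : IsSimpleModule (MonoidAlgebra ℂ G) ρ.asModule)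
    (n : ℕ) (hn : 0 < n) :
    ∃ N : Subgroup (Fin n → G),
      (N : Set (Fin n → G)) =
          {f | (∀ i, f i ∈ Subgroup.center G) ∧ (List.ofFn f).prod = 1} ∧
      ∃ _hN : N.Normal,
        (∃ σ : Representation ℂ ((Fin n → G) ⧸ N) (⨂[ℂ] _ : Fin n, V),
          (∀ f : Fin n → G,
            σ (QuotientGroup.mk f) = PiTensorProduct.map (fun i => ρ (f i))) ∧
          IsSimpleModule (MonoidAlgebra ℂ ((Fin n → G) ⧸ N)) σ.asModule) ∧
        (Module.finrank ℂ V) ^ n ∣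
          Fintype.card G ^ n / Nat.card (Subgroup.center G) ^ (n - 1) :=
  stmt_11_general ℂ G V ρ hirr n hn
end

section
/- Let H be a finite-dimensional Hopf algebra over a field k, and K a Hopf subalgebra of H. Then dim_k K divides dim_k H. -/
open TensorProduct

/-- A subalgebra of a Hopf algebra which is closed under comultiplication and the antipode,
i.e. a Hopf subalgebra. -/
def IsHopfSubalgebra (k : Type*) {H : Type*} [CommRing k] [Ring H] [HopfAlgebra k H]
    (K : Subalgebra k H) : Prop :=
  (∀ x ∈ K, Coalgebra.comul (R := k) x ∈
      LinearMap.range (TensorProduct.map K.toSubmodule.subtype K.toSubmodule.subtype)) ∧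
    ∀ x ∈ K, HopfAlgebra.antipode (R := k) x ∈ K

/-!
It suffices that `Δ(K) ⊆ H ⊗ K`, i.e. that `K` is a left coideal subalgebra. Choose a maximal left
ideal `m` of `K` for which `dim Hom_K(H, K/m) / dim (K/m)` is maximal, equal to `t / r` say. By
Nakayama's lemma this maximality gives a surjection `f : Kᵗ → Hʳ` of `K`-modules.

Let `V = H ⊗ K/m`, on which `K` acts through `Δ : K → H ⊗ K`. The maps `h ↦ h₁ e ⊗ ψ(h₂)`, for
`e ∈ H` and `ψ ∈ Hom_K(H, K/m)`, show `dim H * dim Hom_K(H, K/m) ≤ dim Hom_K(H, V)`: the antipode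
recovers `ψ ⊗ e` from them. Hence `dim Hom_K(Hʳ, V) ≥ t * dim V = dim Hom_K(Kᵗ, V)`, so that every
`K`-linear map `Kᵗ → V` factors through `f` and kills `ker f`. Since `V` is faithful, `f` is an
isomorphism `Kᵗ ≃ Hʳ`, and the counit of `K` makes `r` divide `t`.

Faithfulness of `V` comes from the fact that a nonzero right ideal `N` of `H` with `Δ(N) ⊆ H ⊗ N`
contains `1`.
-/

open Module (finrank)

section HomDimension

variable {k A : Type*} [Field k] [Ring A] [Algebra k A]
variable {M N T : Type*} [AddCommGroup M] [Module A M] [AddCommGroup N] [Module A N]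
  [AddCommGroup T] [Module k T] [Module A T] [IsScalarTower k A T]

theorem finiteDimensional_linearMap [Module k M] [IsScalarTower k A M] [FiniteDimensional k M]
    [FiniteDimensional k T] : FiniteDimensional k (M →ₗ[A] T) :=
  Module.Finite.of_injective (LinearMap.restrictScalarsₗ k A M T k)
    (LinearMap.restrictScalars_injective k)

theorem finrank_linearMap_congr (e : M ≃ₗ[A] N) :
    finrank k (M →ₗ[A] T) = finrank k (N →ₗ[A] T) :=
  (LinearEquiv.congrLeft T k e).finrank_eq

theorem finrank_linearMap_self : finrank k (A →ₗ[A] T) = finrank k T :=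
  (LinearMap.ringLmapEquivSelf A k T).finrank_eq

theorem finrank_linearMap_pi (ι : Type*) [Fintype ι] [Module.Finite k (M →ₗ[A] T)] :
    finrank k ((ι → M) →ₗ[A] T) = Fintype.card ι * finrank k (M →ₗ[A] T) := by
  classical
  rw [← (LinearMap.lsum A (fun _ : ι => M) k (M := T)).finrank_eq, Module.finrank_pi_fintype,
    Finset.sum_const, Finset.card_univ, smul_eq_mul]

theorem finrank_linearMap_eq_add_of_isCompl {p q : Submodule A M} (h : IsCompl p q)
    [Module.Finite k (M →ₗ[A] T)] :
    finrank k (M →ₗ[A] T) = finrank k (p →ₗ[A] T) + finrank k (q →ₗ[A] T) := by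
  have := Module.Finite.of_isComplemented_domain k T ⟨q, h⟩
  have := Module.Finite.of_isComplemented_domain k T ⟨p, h.symm⟩
  rw [← finrank_linearMap_congr (p.prodEquivOfIsCompl q h),
    ← (LinearMap.coprodEquiv (R := A) (M := p) (M₂ := q) (M₃ := T) k).finrank_eq,
    Module.finrank_prod]

theorem finrank_linearMap_le_finrank_linearMap_ker [IsSemisimpleModule A M]
    [Module.Finite k (M →ₗ[A] T)] [Module.Finite k (N →ₗ[A] T)]
    (h : finrank k (N →ₗ[A] T) ≤ finrank k (M →ₗ[A] T)) (f : M →ₗ[A] N) {C : Submodule A N}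
    (hC : IsCompl (LinearMap.range f) C) :
    finrank k (C →ₗ[A] T) ≤ finrank k (LinearMap.ker f →ₗ[A] T) := by
  obtain ⟨D, hD⟩ := exists_isCompl (LinearMap.ker f)
  have e : D ≃ₗ[A] LinearMap.range f :=
    (Submodule.quotientEquivOfIsCompl _ _ hD).symm.trans f.quotKerEquivRange
  rw [finrank_linearMap_eq_add_of_isCompl hC, finrank_linearMap_eq_add_of_isCompl hD,
    finrank_linearMap_congr e] at h
  omega

variable (k M T) in
theorem finrank_linearMap_quotient_jacobson [IsSemisimpleModule A T] :
    finrank k ((M ⧸ Module.jacobson A M) →ₗ[A] T) = finrank k (M →ₗ[A] T) := by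
  refine (LinearEquiv.ofBijective (LinearMap.lcomp k T (Module.jacobson A M).mkQ)
    ⟨fun f g hfg => Submodule.linearMap_qext _ hfg, fun f => ?_⟩).finrank_eq
  have hker : Module.jacobson A M ≤ LinearMap.ker f := by
    simpa [IsSemisimpleModule.jacobson_eq_bot] using Module.le_comap_jacobson f
  exact ⟨(Module.jacobson A M).liftQ f hker, Submodule.liftQ_mkQ _ _ hker⟩

end HomDimension

section Ranges

variable {A M N : Type*} [Ring A] [AddCommGroup M] [Module A M] [AddCommGroup N] [Module A N]

theorem exists_range_lt_range_of_ker_linearMap_ne_zero {f : M →ₗ[A] N} {C : Submodule A N}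
    (hC : Disjoint (LinearMap.range f) C) (hker : IsComplemented (LinearMap.ker f))
    {g : LinearMap.ker f →ₗ[A] C} (hg : g ≠ 0) :
    ∃ f' : M →ₗ[A] N, LinearMap.range f < LinearMap.range f' := by
  obtain ⟨D, hD⟩ := hker
  let f' : M →ₗ[A] N := f + C.subtype ∘ₗ g ∘ₗ (LinearMap.ker f).projectionOnto D hD
  have f'_of_mem_ker (x : LinearMap.ker f) : f' x = g x := by simp [f']
  have f'_of_mem (x : M) (hx : x ∈ D) : f' x = f x := by
    simp [f', LinearMap.ker f |>.projectionOnto_apply_of_mem_right hD hx]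
  refine ⟨f', lt_of_le_not_ge ?_ fun hle => hg (LinearMap.ext fun x => ?_)⟩
  · rintro _ ⟨x, rfl⟩
    refine ⟨x - (LinearMap.ker f).projection D hD x, ?_⟩
    rw [f'_of_mem _ (Submodule.sub_projection_mem hD x), map_sub, sub_eq_self]
    exact Submodule.projection_apply_mem hD x
  · exact Subtype.ext (Submodule.disjoint_def.mp hC _ (hle ⟨x, f'_of_mem_ker x⟩) (g x).2)

variable (M) in
theorem exists_maximal_ideal_linearMap_ne_zero [IsSemisimpleModule A M] [Nontrivial M] :
    ∃ m : Ideal A, m.IsMaximal ∧ ∃ (i : (A ⧸ m) →ₗ[A] M) (p : M →ₗ[A] A ⧸ m),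
      Function.Injective i ∧ p ≠ 0 := by
  obtain ⟨S, hS⟩ := IsSemisimpleModule.exists_simple_submodule A M
  obtain ⟨m, hm, ⟨e⟩⟩ := isSimpleModule_iff_quot_maximal.mp hS
  obtain ⟨p, hp⟩ := IsSemisimpleModule.extension_property S.subtype S.injective_subtype
    e.toLinearMap
  have := IsSimpleModule.nontrivial A S
  obtain ⟨x, hx⟩ := exists_ne (0 : S)
  refine ⟨m, hm, S.subtype ∘ₗ e.symm.toLinearMap, p, S.injective_subtype.comp e.symm.injective,
    fun hp0 => hx (e.injective ?_)⟩
  simpa [hp0] using (LinearMap.congr_fun hp x).symm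

end Ranges

theorem isSemisimpleModule_quotient_jacobson (A M : Type*) [Ring A] [AddCommGroup M] [Module A M]
    [IsArtinian A M] : IsSemisimpleModule A (M ⧸ Module.jacobson A M) :=
  (IsArtinian.isSemisimpleModule_iff_jacobson A _).mpr (Module.jacobson_quotient_jacobson A M)

theorem surjective_of_surjective_mkQ_jacobson_comp {A M N : Type*} [Ring A] [AddCommGroup M]
    [Module A M] [AddCommGroup N] [Module A N] [IsNoetherian A N] {f : M →ₗ[A] N}
    (hf : Function.Surjective ((Module.jacobson A N).mkQ ∘ₗ f)) : Function.Surjective f := by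
  refine LinearMap.range_eq_top.mp ((eq_top_or_exists_le_coatom _).resolve_right ?_)
  rintro ⟨p, hp, hle⟩
  refine hp.1 (eq_top_iff.mpr fun x _ => ?_)
  obtain ⟨y, hy⟩ := hf ((Module.jacobson A N).mkQ x)
  have hsub : f y - x ∈ p :=
    (sInf_le hp : Module.jacobson A N ≤ p) ((Submodule.Quotient.eq _).mp hy)
  simpa using p.sub_mem (hle ⟨y, rfl⟩) hsub

-- `m` maximises `a / b`.
theorem exists_forall_mul_le_mul_of_bounded {α : Type*} [Nonempty α] {a b : α → ℕ} {c d : ℕ}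
    (ha : ∀ x, a x ≤ c) (hb : ∀ x, b x ≤ d) (hpos : ∀ x, 0 < b x) :
    ∃ m, ∀ x, a x * b m ≤ a m * b x := by
  have hfin : (Set.range fun x => (a x, b x)).Finite :=
    ((Set.finite_Iic c).prod (Set.finite_Iic d)).subset
      (Set.range_subset_iff.mpr fun x => ⟨ha x, hb x⟩)
  obtain ⟨_, ⟨m, rfl⟩, hm⟩ := Set.exists_max_image _ (fun p : ℕ × ℕ => (p.1 / p.2 : ℚ)) hfin
    (Set.range_nonempty _)
  refine ⟨m, fun x => ?_⟩
  have h := hm _ ⟨x, rfl⟩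
  rw [div_le_div_iff₀ (mod_cast hpos x) (mod_cast hpos m)] at h
  exact_mod_cast h

section Surjections

variable {k A : Type*} [Field k] [Ring A] [Algebra k A] [FiniteDimensional k A]
variable {M N P : Type*} [AddCommGroup M] [Module k M] [Module A M] [IsScalarTower k A M]
  [FiniteDimensional k M] [AddCommGroup N] [Module k N] [Module A N] [IsScalarTower k A N]
  [FiniteDimensional k N] [AddCommGroup P] [Module k P] [Module A P] [IsScalarTower k A P]
  [FiniteDimensional k P]

theorem exists_range_lt_range_of_finrank_linearMap_le [IsSemisimpleModule A M]
    [IsSemisimpleModule A N]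
    (h : ∀ m : Ideal A, m.IsMaximal → finrank k (N →ₗ[A] A ⧸ m) ≤ finrank k (M →ₗ[A] A ⧸ m))
    {f : M →ₗ[A] N} (hf : LinearMap.range f ≠ ⊤) :
    ∃ f' : M →ₗ[A] N, LinearMap.range f < LinearMap.range f' := by
  obtain ⟨C, hC⟩ := exists_isCompl (LinearMap.range f)
  have : Nontrivial C := (Submodule.nontrivial_iff_ne_bot).mpr fun hC0 =>
    hf (by simpa [hC0] using hC.sup_eq_top)
  obtain ⟨m, hm, i, p, hi, hp⟩ := exists_maximal_ideal_linearMap_ne_zero (A := A) C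
  have := finiteDimensional_linearMap (k := k) (A := A) (M := M) (T := A ⧸ m)
  have := finiteDimensional_linearMap (k := k) (A := A) (M := N) (T := A ⧸ m)
  have hpos : 0 < finrank k (LinearMap.ker f →ₗ[A] A ⧸ m) :=
    (Module.finrank_pos_iff_exists_ne_zero.mpr ⟨p, hp⟩).trans_le
      (finrank_linearMap_le_finrank_linearMap_ker (h m hm) f hC)
  have := Module.nontrivial_of_finrank_pos hpos
  obtain ⟨g, hg⟩ := exists_ne (0 : LinearMap.ker f →ₗ[A] A ⧸ m)
  refine exists_range_lt_range_of_ker_linearMap_ne_zero hC.disjoint (exists_isCompl _) (g := i ∘ₗ g)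
    fun h0 => hg (LinearMap.ext fun x => hi ?_)
  simpa using LinearMap.congr_fun h0 x

theorem exists_surjective_of_isSemisimpleModule [IsSemisimpleModule A M] [IsSemisimpleModule A N]
    (h : ∀ m : Ideal A, m.IsMaximal → finrank k (N →ₗ[A] A ⧸ m) ≤ finrank k (M →ₗ[A] A ⧸ m)) :
    ∃ f : M →ₗ[A] N, Function.Surjective f := by
  have : IsNoetherian A N := isNoetherian_of_tower k inferInstance
  obtain ⟨_, ⟨f, rfl⟩, hf⟩ := WellFounded.has_min (wellFounded_gt (α := Submodule A N))
    (Set.range fun f : M →ₗ[A] N => LinearMap.range f) (Set.range_nonempty _)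
  refine ⟨f, LinearMap.range_eq_top.mp (by_contra fun hne => ?_)⟩
  obtain ⟨f', hf'⟩ := exists_range_lt_range_of_finrank_linearMap_le h hne
  exact hf _ ⟨f', rfl⟩ hf'

theorem exists_surjective_of_projective [Module.Projective A M]
    (h : ∀ m : Ideal A, m.IsMaximal → finrank k (N →ₗ[A] A ⧸ m) ≤ finrank k (M →ₗ[A] A ⧸ m)) :
    ∃ f : M →ₗ[A] N, Function.Surjective f := by
  have : IsArtinian A M := isArtinian_of_tower k inferInstance
  have : IsArtinian A N := isArtinian_of_tower k inferInstance
  have : IsNoetherian A N := isNoetherian_of_tower k inferInstance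
  have := isSemisimpleModule_quotient_jacobson A M
  have := isSemisimpleModule_quotient_jacobson A N
  obtain ⟨g, hg⟩ := exists_surjective_of_isSemisimpleModule (k := k)
    (M := M ⧸ Module.jacobson A M) (N := N ⧸ Module.jacobson A N) fun m hm => by
      have : IsSimpleModule A (A ⧸ m) := isSimpleModule_iff_isCoatom.mpr hm.out
      rw [finrank_linearMap_quotient_jacobson, finrank_linearMap_quotient_jacobson]
      exact h m hm
  obtain ⟨f, hf⟩ := Module.projective_lifting_property (Module.jacobson A N).mkQ
    (g ∘ₗ (Module.jacobson A M).mkQ) (Submodule.mkQ_surjective _)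
  refine ⟨f, surjective_of_surjective_mkQ_jacobson_comp ?_⟩
  rw [hf]
  exact hg.comp (Submodule.mkQ_surjective _)

variable (k A N) in
theorem exists_maximal_ideal_forall_finrank_mul_le [Nontrivial A] :
    ∃ m : Ideal A, m.IsMaximal ∧ ∀ m' : Ideal A, m'.IsMaximal →
      finrank k (N →ₗ[A] A ⧸ m') * finrank k (A ⧸ m) ≤
        finrank k (N →ₗ[A] A ⧸ m) * finrank k (A ⧸ m') := by
  have : Nonempty {m : Ideal A // m.IsMaximal} :=
    (Ideal.exists_maximal A).elim fun m hm => ⟨⟨m, hm⟩⟩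
  have hle (m : Ideal A) : finrank k (A ⧸ m) ≤ finrank k A :=
    LinearMap.finrank_le_finrank_of_surjective (f := m.mkQ.restrictScalars k) m.mkQ_surjective
  have hHom_le (m : Ideal A) : finrank k (N →ₗ[A] A ⧸ m) ≤ finrank k N * finrank k A :=
    calc finrank k (N →ₗ[A] A ⧸ m) ≤ finrank k (N →ₗ[k] A ⧸ m) :=
          LinearMap.finrank_le_finrank_of_injective
            (f := LinearMap.restrictScalarsₗ k A N (A ⧸ m) k)
            (LinearMap.restrictScalars_injective k)
      _ = finrank k N * finrank k (A ⧸ m) := Module.finrank_linearMap k k N (A ⧸ m)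
      _ ≤ finrank k N * finrank k A := Nat.mul_le_mul_left _ (hle m)
  have hpos (m : {m : Ideal A // m.IsMaximal}) : 0 < finrank k (A ⧸ m.1) := by
    have : Nontrivial (A ⧸ m.1) := Submodule.Quotient.nontrivial_iff.mpr m.2.ne_top
    exact Module.finrank_pos
  obtain ⟨m, hm⟩ := exists_forall_mul_le_mul_of_bounded
    (fun m : {m : Ideal A // m.IsMaximal} => hHom_le m.1) (fun m => hle m.1) hpos
  exact ⟨m, m.2, fun m' hm' => hm ⟨m', hm'⟩⟩

variable (k A N) in
theorem exists_surjective_pi [Nontrivial A] :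
    ∃ (m : Ideal A) (t r : ℕ) (f : (Fin t → A) →ₗ[A] (Fin r → N)), m.IsMaximal ∧ 0 < r ∧
      t * finrank k (A ⧸ m) = r * finrank k (N →ₗ[A] A ⧸ m) ∧ Function.Surjective f := by
  obtain ⟨m, hm, hle⟩ := exists_maximal_ideal_forall_finrank_mul_le k A N
  have : Nontrivial (A ⧸ m) := Submodule.Quotient.nontrivial_iff.mpr hm.ne_top
  obtain ⟨f, hf⟩ := exists_surjective_of_projective (k := k)
    (M := Fin (finrank k (N →ₗ[A] A ⧸ m)) → A) (N := Fin (finrank k (A ⧸ m)) → N)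
    fun (m' : Ideal A) hm' => by
      have := finiteDimensional_linearMap (k := k) (A := A) (M := N) (T := A ⧸ m')
      have := finiteDimensional_linearMap (k := k) (A := A) (M := A) (T := A ⧸ m')
      rw [finrank_linearMap_pi, finrank_linearMap_pi, finrank_linearMap_self, Fintype.card_fin,
        Fintype.card_fin, mul_comm]
      exact hle m' hm'
  exact ⟨m, _, _, f, hm, Module.finrank_pos (R := k) (M := A ⧸ m), mul_comm _ _, hf⟩

end Surjections

section Freeness

variable {k A : Type*} [Field k] [Ring A] [Algebra k A] [FiniteDimensional k A]
variable {N V : Type*} [AddCommGroup N] [Module k N] [Module A N] [IsScalarTower k A N]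
  [FiniteDimensional k N] [AddCommGroup V] [Module k V] [Module A V] [IsScalarTower k A V]
  [FiniteDimensional k V]

theorem injective_of_finrank_linearMap_le [FaithfulSMul A V] {ι : Type*} [Fintype ι]
    {f : (ι → A) →ₗ[A] N} (hf : Function.Surjective f)
    (h : Fintype.card ι * finrank k V ≤ finrank k (N →ₗ[A] V)) : Function.Injective f := by
  have := finiteDimensional_linearMap (k := k) (A := A) (M := N) (T := V)
  have := finiteDimensional_linearMap (k := k) (A := A) (M := A) (T := V)
  have := finiteDimensional_linearMap (k := k) (A := A) (M := ι → A) (T := V)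
  have hcomp_inj : Function.Injective (LinearMap.lcomp k V f) := fun g g' hgg' =>
    LinearMap.ext fun x => by
      obtain ⟨y, rfl⟩ := hf x
      exact LinearMap.congr_fun hgg' y
  have hcomp_surj : Function.Surjective (LinearMap.lcomp k V f) := by
    refine (LinearMap.injective_iff_surjective_of_finrank_eq_finrank
      (le_antisymm (LinearMap.finrank_le_finrank_of_injective hcomp_inj) ?_)).mp hcomp_inj
    rwa [finrank_linearMap_pi, finrank_linearMap_self]
  refine (injective_iff_map_eq_zero f).mpr fun n hn => funext fun i => ?_
  refine eq_of_smul_eq_smul (α := V) fun v => ?_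
  obtain ⟨g, hg⟩ := hcomp_surj (LinearMap.toSpanSingleton A V v ∘ₗ LinearMap.proj i)
  simpa [hn] using (LinearMap.congr_fun hg n).symm

theorem finrank_dvd_of_linearEquiv_pi (ε : A →ₐ[k] k) {ι κ : Type*} [Finite ι] [Finite κ]
    [Nonempty κ] (e : (ι → A) ≃ₗ[A] (κ → N)) : finrank k A ∣ finrank k N := by
  cases nonempty_fintype ι
  cases nonempty_fintype κ
  let : Module A k := Module.compHom k ε.toRingHom
  have : IsScalarTower k A k := ⟨fun c b d => by
    change ε (c • b) * d = c * (ε b * d)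
    simp [mul_assoc]⟩
  have := finiteDimensional_linearMap (k := k) (A := A) (M := N) (T := k)
  have := finiteDimensional_linearMap (k := k) (A := A) (M := A) (T := k)
  have hcard : Fintype.card ι = Fintype.card κ * finrank k (N →ₗ[A] k) := by
    simpa [finrank_linearMap_pi, finrank_linearMap_self] using
      finrank_linearMap_congr (k := k) (T := k) e
  have hdim : Fintype.card ι * finrank k A = Fintype.card κ * finrank k N := by
    simpa [Module.finrank_pi_fintype] using (e.restrictScalars k).finrank_eq
  rw [hcard, mul_assoc] at hdim
  exact ⟨_, (Nat.eq_of_mul_eq_mul_left Fintype.card_pos hdim).symm.trans (mul_comm _ _)⟩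

end Freeness

open Coalgebra HopfAlgebra WithConv

/-- `N` is a left coideal of `C`: `Δ(N) ⊆ C ⊗ N`, where `C ⊗ N` stands for its image in `C ⊗ C`. -/
def IsLeftCoideal (k : Type*) {C : Type*} [CommRing k] [AddCommGroup C] [Module k C]
    [CoalgebraStruct k C] (N : Submodule k C) : Prop :=
  ∀ x ∈ N, comul (R := k) x ∈ LinearMap.range (N.subtype.lTensor C)

theorem IsHopfSubalgebra.isLeftCoideal {k H : Type*} [CommRing k] [Ring H] [HopfAlgebra k H]
    {K : Subalgebra k H} (hK : IsHopfSubalgebra k K) :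
    IsLeftCoideal k (Subalgebra.toSubmodule K) := by
  intro x hx
  obtain ⟨z, hz⟩ := hK.1 x hx
  exact ⟨K.toSubmodule.subtype.rTensor _ z, by
    rw [← hz, ← LinearMap.comp_apply, LinearMap.lTensor_comp_rTensor]⟩

section Coideal

variable {k C W : Type*} [CommRing k] [AddCommGroup C] [Module k C] [Module.Flat k C]
  [AddCommGroup W] [Module k W]

theorem range_lTensor_subtype_ker {V : Type*} [AddCommGroup V] [Module k V] (f : V →ₗ[k] W) :
    LinearMap.range ((LinearMap.ker f).subtype.lTensor C) = LinearMap.ker (f.lTensor C) :=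
  (LinearMap.exact_iff.mp (Module.Flat.lTensor_exact C
    (LinearMap.exact_subtype_ker_map f))).symm

theorem isLeftCoideal_ker_lTensor_comp_comul [Coalgebra k C] (f : C →ₗ[k] W) :
    IsLeftCoideal k (LinearMap.ker (f.lTensor C ∘ₗ comul)) := by
  intro x hx
  rw [range_lTensor_subtype_ker, LinearMap.mem_ker]
  calc (f.lTensor C ∘ₗ comul).lTensor C (comul x)
      = (f.lTensor C).lTensor C (comul.lTensor C (comul x)) := by rw [LinearMap.lTensor_comp]; rfl
    _ = (f.lTensor C).lTensor C (TensorProduct.assoc k C C C (comul.rTensor C (comul x))) := by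
        rw [coassoc_apply]
    _ = TensorProduct.assoc k C C W (comul.rTensor W (f.lTensor C (comul x))) := by
        rw [← LinearMap.comp_apply (comul.rTensor W), LinearMap.rTensor_comp_lTensor,
          ← LinearMap.lTensor_comp_rTensor, LinearMap.comp_apply]
        exact LinearMap.congr_fun (by ext; rfl :
          (f.lTensor C).lTensor C ∘ₗ (TensorProduct.assoc k C C C).toLinearMap =
            (TensorProduct.assoc k C C W).toLinearMap ∘ₗ f.lTensor (C ⊗[k] C)) _
    _ = 0 := by
        rw [← LinearMap.comp_apply (f.lTensor C), LinearMap.mem_ker.mp hx, map_zero, map_zero]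

end Coideal

section GaloisMap

variable {k H : Type*} [CommRing k] [Ring H] [HopfAlgebra k H]

/-- The map `a ⊗ b ↦ a₁ ⊗ q(a₂) b`. For `q = id` this is the Galois map of `H`, whose inverse is
the case where `q` is the antipode. -/
noncomputable def comulTwist (q : H →ₗ[k] H) : H ⊗[k] H →ₗ[k] H ⊗[k] H :=
  (LinearMap.mul' k H ∘ₗ q.rTensor H).lTensor H ∘ₗ (TensorProduct.assoc k H H H).toLinearMap ∘ₗ
    comul.rTensor H

theorem comulTwist_tmul (q : H →ₗ[k] H) (a b : H) :
    comulTwist q (a ⊗ₜ b) = (LinearMap.mulRight k b ∘ₗ q).lTensor H (comul a) := by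
  simp [comulTwist, ← (ℛ k a).eq, TensorProduct.sum_tmul]

theorem comulTwist_lTensor (p q : H →ₗ[k] H) (b : H) (z : H ⊗[k] H) :
    comulTwist p ((LinearMap.mulRight k b ∘ₗ q).lTensor H z) =
      (LinearMap.mulRight k b ∘ₗ LinearMap.mul' k H ∘ₗ TensorProduct.map p q).lTensor H
        (TensorProduct.assoc k H H H (comul.rTensor H z)) := by
  induction z with
  | zero => simp
  | add z w hz hw => simp only [map_add, hz, hw]
  | tmul x y =>
    rw [LinearMap.lTensor_tmul, comulTwist_tmul, LinearMap.rTensor_tmul, ← (ℛ k x).eq]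
    simp [TensorProduct.sum_tmul, mul_assoc]

theorem comulTwist_comp_comulTwist (p q : H →ₗ[k] H) :
    comulTwist p ∘ₗ comulTwist q = comulTwist (toConv p * toConv q).ofConv := by
  refine TensorProduct.ext' fun a b => ?_
  rw [LinearMap.comp_apply, comulTwist_tmul, comulTwist_lTensor, coassoc_apply, comulTwist_tmul,
    LinearMap.convMul_def, ← LinearMap.lTensor_comp_apply]
  rfl

theorem comulTwist_one : comulTwist (1 : WithConv (H →ₗ[k] H)).ofConv = LinearMap.id := by
  refine TensorProduct.ext' fun a b => ?_
  rw [comulTwist_tmul, LinearMap.convOne_def, ofConv_toConv, ← LinearMap.comp_assoc,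
    LinearMap.lTensor_comp_apply, lTensor_counit_comul]
  simp

theorem comulTwist_id_injective :
    Function.Injective (comulTwist (LinearMap.id : H →ₗ[k] H)) := by
  have h : comulTwist (antipode k) ∘ₗ comulTwist (LinearMap.id : H →ₗ[k] H) = LinearMap.id := by
    rw [comulTwist_comp_comulTwist, LinearMap.antipode_mul_id, comulTwist_one]
  exact Function.LeftInverse.injective (g := comulTwist (antipode k)) (LinearMap.congr_fun h)

theorem comulTwist_id_mem_range_lTensor {N : Submodule k H} (hN : IsLeftCoideal k N)
    (hmul : ∀ x ∈ N, ∀ h : H, x * h ∈ N) {z : H ⊗[k] H}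
    (hz : z ∈ LinearMap.range (N.subtype.rTensor H)) :
    comulTwist LinearMap.id z ∈ LinearMap.range (N.subtype.lTensor H) := by
  obtain ⟨z, rfl⟩ := hz
  induction z with
  | zero => simp
  | add z w hz hw => rw [map_add, map_add]; exact add_mem hz hw
  | tmul n b =>
    obtain ⟨w, hw⟩ := hN n n.2
    let mulRightN : N →ₗ[k] N := (LinearMap.mulRight k b).restrict fun x hx => hmul x hx b
    refine ⟨mulRightN.lTensor H w, ?_⟩
    rw [LinearMap.rTensor_tmul, comulTwist_tmul, LinearMap.comp_id, N.subtype_apply, ← hw,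
      ← LinearMap.lTensor_comp_apply, ← LinearMap.lTensor_comp_apply]
    rfl

theorem rid_lTensor_comul_mul_tmul_one (φ : H →ₗ[k] k) (e h : H) :
    TensorProduct.rid k H (φ.lTensor H (comul h * (e ⊗ₜ 1))) =
      (toConv (LinearMap.id : H →ₗ[k] H) * toConv (φ.smulRight e)) h := by
  rw [(ℛ k h).convMul_apply]
  nth_rw 1 [← (ℛ k h).eq]
  simp [Finset.sum_mul]

theorem eq_zero_of_id_convMul_eq_zero {F : H →ₗ[k] H}
    (h : toConv LinearMap.id * toConv F = 0) : F = 0 := by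
  have := congrArg (toConv (antipode k) * ·) h
  simpa [← mul_assoc] using this

end GaloisMap

section RightIdeal

theorem lTensor_mul_eq_zero {k H W : Type*} [CommRing k] [Ring H] [Algebra k H] [Module.Flat k H]
    [AddCommGroup W] [Module k W] {f : H →ₗ[k] W}
    (hmul : ∀ x ∈ LinearMap.ker f, ∀ h : H, x * h ∈ LinearMap.ker f) {z : H ⊗[k] H}
    (hz : f.lTensor H z = 0) (w : H ⊗[k] H) : f.lTensor H (z * w) = 0 := by
  obtain ⟨z, rfl⟩ := (range_lTensor_subtype_ker f).ge hz
  clear hz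
  induction z with
  | zero => simp
  | add z z' hz hz' => rw [map_add, add_mul, map_add, hz, hz', add_zero]
  | tmul a x =>
    induction w with
    | zero => simp
    | add w w' hw hw' => rw [mul_add, map_add, hw, hw', add_zero]
    | tmul b h =>
      have hxh : f (x * h) = 0 := hmul x x.2 h
      simp [hxh]

variable {k H : Type*} [Field k] [Ring H] [HopfAlgebra k H]

theorem one_mem_of_one_tmul_mem_range_rTensor {N : Submodule k H} {n : H} (hn : n ≠ 0)
    (h : 1 ⊗ₜ n ∈ LinearMap.range (N.subtype.rTensor H)) : (1 : H) ∈ N := by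
  obtain ⟨z, hz⟩ := h
  obtain ⟨ω, hω⟩ := Module.Projective.exists_dual_eq_one k hn
  have hcontract : TensorProduct.rid k H (ω.lTensor H (N.subtype.rTensor H z)) =
      TensorProduct.rid k N (ω.lTensor N z) := by
    clear hz
    induction z with
    | zero => simp
    | add z w hz hw => simp [hz, hw]
    | tmul x y => simp
  rw [hz, LinearMap.lTensor_tmul, hω, TensorProduct.rid_tmul, one_smul] at hcontract
  exact hcontract ▸ Subtype.prop _

-- The Galois map carries `N ⊗ H` into `H ⊗ N`, hence onto it, and fixes `1 ⊗ n`.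
theorem IsLeftCoideal.one_mem [FiniteDimensional k H] {N : Submodule k H} (hN : IsLeftCoideal k N)
    (hmul : ∀ x ∈ N, ∀ h : H, x * h ∈ N) (h0 : N ≠ ⊥) : (1 : H) ∈ N := by
  have hmap : (LinearMap.range (N.subtype.rTensor H)).map (comulTwist LinearMap.id) =
      LinearMap.range (N.subtype.lTensor H) := by
    refine Submodule.eq_of_le_of_finrank_eq
      (Submodule.map_le_iff_le_comap.mpr fun z => comulTwist_id_mem_range_lTensor hN hmul) ?_
    rw [← (Submodule.equivMapOfInjective _ comulTwist_id_injective _).finrank_eq,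
      LinearMap.finrank_range_of_inj
        (Module.Flat.rTensor_preserves_injective_linearMap _ N.injective_subtype),
      LinearMap.finrank_range_of_inj
        (Module.Flat.lTensor_preserves_injective_linearMap _ N.injective_subtype),
      Module.finrank_tensorProduct, Module.finrank_tensorProduct, mul_comm]
  obtain ⟨n, hnN, hn0⟩ := N.ne_bot_iff.mp h0
  refine one_mem_of_one_tmul_mem_range_rTensor hn0 ?_
  obtain ⟨p, hp, hpn⟩ := hmap.ge ⟨1 ⊗ₜ ⟨n, hnN⟩, rfl⟩
  have htwist : comulTwist LinearMap.id (1 ⊗ₜ n) = (1 ⊗ₜ n : H ⊗[k] H) := by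
    simp [comulTwist_tmul, Bialgebra.comul_one, Algebra.TensorProduct.one_def]
  rwa [← comulTwist_id_injective (hpn.trans htwist.symm)]

theorem eq_zero_of_comul_mem_ker_lTensor [FiniteDimensional k H] {W : Type*} [AddCommGroup W]
    [Module k W] {f : H →ₗ[k] W} (hmul : ∀ x ∈ LinearMap.ker f, ∀ h : H, x * h ∈ LinearMap.ker f)
    (hf : f 1 ≠ 0) {x : H} (hx : f.lTensor H (comul x) = 0) : x = 0 := by
  let N : Submodule k H := LinearMap.ker (f.lTensor H ∘ₗ comul)
  have hN_le : N ≤ LinearMap.ker f := fun y hy => by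
    have h := congrArg (counit.rTensor W) (LinearMap.mem_ker.mp hy)
    rw [LinearMap.comp_apply, ← LinearMap.comp_apply, LinearMap.rTensor_comp_lTensor,
      ← LinearMap.lTensor_comp_rTensor, LinearMap.comp_apply, rTensor_counit_comul] at h
    simpa using congrArg (TensorProduct.lid k W) h
  have hN_mul (y : H) (hy : y ∈ N) (h : H) : y * h ∈ N := by
    rw [LinearMap.mem_ker, LinearMap.comp_apply, Bialgebra.comul_mul]
    exact lTensor_mul_eq_zero hmul hy _
  by_contra hx0
  exact hf (hN_le ((isLeftCoideal_ker_lTensor_comp_comul f).one_mem hN_mul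
    (N.ne_bot_iff.mpr ⟨x, hx, hx0⟩)))

end RightIdeal

section CoactionTensor

variable {k A B : Type*} [CommRing k] [Ring A] [Algebra k A] [Ring B] [Algebra k B]
variable {S : Type*} [AddCommGroup S] [Module k S]

variable (S) in
/-- The action of `A ⊗ B` on `A ⊗ S`, where `A` acts on itself by left multiplication and `S` is
a `B`-module. -/
noncomputable def tensorAction [Module B S] [IsScalarTower k B S] :
    A ⊗[k] B →ₐ[k] Module.End k (A ⊗[k] S) :=
  Module.endTensorEndAlgHom.comp
    (Algebra.TensorProduct.map (Algebra.lmul k A) (Algebra.lsmul k k S))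

theorem tensorAction_tmul_tmul [Module B S] [IsScalarTower k B S] (a a' : A) (b : B) (s : S) :
    tensorAction S (a ⊗ₜ[k] b) (a' ⊗ₜ s) = (a * a') ⊗ₜ (b • s) := rfl

variable (S) in
/-- The tensor product `A ⊗ S` as a `B`-module, with `B` acting through an algebra homomorphism
`ρ : B → A ⊗ B`. A type synonym, since `A ⊗ S` may carry other actions of `B`. -/
def CoactionTensor (_ρ : B →ₐ[k] A ⊗[k] B) : Type _ := A ⊗[k] S

namespace CoactionTensor

variable (ρ : B →ₐ[k] A ⊗[k] B)

noncomputable instance : AddCommGroup (CoactionTensor S ρ) :=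
  inferInstanceAs (AddCommGroup (A ⊗[k] S))

noncomputable instance : Module k (CoactionTensor S ρ) :=
  inferInstanceAs (Module k (A ⊗[k] S))

instance [Module.Finite k A] [Module.Finite k S] : Module.Finite k (CoactionTensor S ρ) :=
  inferInstanceAs (Module.Finite k (A ⊗[k] S))

theorem finrank_eq [StrongRankCondition k] [Module.Free k A] [Module.Free k S] :
    finrank k (CoactionTensor S ρ) = finrank k A * finrank k S :=
  Module.finrank_tensorProduct

/-- The identity map, from `A ⊗ S` to its type synonym. -/
noncomputable def of : A ⊗[k] S ≃ₗ[k] CoactionTensor S ρ := LinearEquiv.refl k _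

variable [Module B S] [IsScalarTower k B S]

noncomputable instance : Module B (CoactionTensor S ρ) :=
  Module.compHom (A ⊗[k] S) ((tensorAction S).comp ρ).toRingHom

theorem smul_of (b : B) (u : A ⊗[k] S) : b • of ρ u = of ρ (tensorAction S (ρ b) u) := rfl

instance : IsScalarTower k B (CoactionTensor S ρ) where
  smul_assoc c b u := by
    obtain ⟨u, rfl⟩ := (of ρ).surjective u
    rw [smul_of, smul_of, map_smul, map_smul, LinearMap.smul_apply, map_smul]

end CoactionTensor

end CoactionTensor

section Coaction

theorem lTensor_map_val_mul {k H : Type*} [CommRing k] [Ring H] [Algebra k H]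
    {K : Subalgebra k H} {S : Type*} [AddCommGroup S] [Module k S] [Module K S]
    [IsScalarTower k K S] (ψ : H →ₗ[K] S) (z : H ⊗[k] K) (y : H ⊗[k] H) :
    (ψ.restrictScalars k).lTensor H
        (Algebra.TensorProduct.map (AlgHom.id k H) K.val z * y) =
      tensorAction S z ((ψ.restrictScalars k).lTensor H y) := by
  induction z with
  | zero => simp
  | add z w hz hw => simp only [map_add, add_mul, hz, hw, LinearMap.add_apply]
  | tmul a x =>
    induction y with
    | zero => simp
    | add y w hy hw => simp only [map_add, mul_add, hy, hw]
    | tmul b h =>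
      have hψ : ψ (x * h) = x • ψ h := ψ.map_smul x h
      simp [tensorAction_tmul_tmul, hψ]

theorem lTensorHomToHomLTensor_lTensor_compr₂_mul {k H S : Type*} [CommRing k] [Ring H]
    [Algebra k H] [AddCommGroup S] [Module k S] (ψ : H →ₗ[k] S) (z : H ⊗[k] H) (h : H) :
    TensorProduct.lTensorHomToHomLTensor (.id k) H H S
        (((LinearMap.mul k H).compr₂ ψ).lTensor H z) h = ψ.lTensor H (z * (1 ⊗ₜ h)) := by
  induction z with
  | zero => simp
  | add z w hz hw => simp [add_mul, hz, hw]
  | tmul a b => simp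

theorem algebraTensorProductMap_val_injective {k A H : Type*} [CommRing k] [Ring A] [Algebra k A]
    [Module.Flat k A] [Ring H] [Algebra k H] (K : Subalgebra k H) :
    Function.Injective (Algebra.TensorProduct.map (AlgHom.id k A) K.val) :=
  Module.Flat.lTensor_preserves_injective_linearMap K.val.toLinearMap Subtype.val_injective

variable {k H : Type*} [Field k] [Ring H] [HopfAlgebra k H] {K : Subalgebra k H}

namespace IsLeftCoideal

/-- The comultiplication of a left coideal subalgebra `K`, as a map `K → H ⊗ K`. -/
noncomputable def coaction (hK : IsLeftCoideal k (Subalgebra.toSubmodule K)) :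
    K →ₐ[k] H ⊗[k] K :=
  (AlgEquiv.ofInjective _ (algebraTensorProductMap_val_injective K)).symm.toAlgHom.comp <|
    ((Bialgebra.comulAlgHom k H).comp K.val).codRestrict
      (Algebra.TensorProduct.map (AlgHom.id k H) K.val).range fun x => hK x x.2

theorem map_val_coaction (hK : IsLeftCoideal k (Subalgebra.toSubmodule K)) (x : K) :
    Algebra.TensorProduct.map (AlgHom.id k H) K.val (hK.coaction x) = comul (R := k) (x : H) :=
  congrArg Subtype.val <|
    (AlgEquiv.ofInjective _ (algebraTensorProductMap_val_injective K)).apply_symm_apply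
      ⟨comul (R := k) (x : H), hK x x.2⟩

variable {S : Type*} [AddCommGroup S] [Module k S] [Module K S] [IsScalarTower k K S]

theorem smul_of_lTensor (hK : IsLeftCoideal k (Subalgebra.toSubmodule K)) (ψ : H →ₗ[K] S) (x : K)
    (y : H ⊗[k] H) :
    x • CoactionTensor.of hK.coaction ((ψ.restrictScalars k).lTensor H y) =
      CoactionTensor.of hK.coaction
        ((ψ.restrictScalars k).lTensor H (comul (R := k) (x : H) * y)) := by
  rw [← hK.map_val_coaction, lTensor_map_val_mul, CoactionTensor.smul_of]

/-- Sends `ψ` to the map `h ↦ h₁ e ⊗ ψ(h₂)`, whose target carries the coaction action of `K`; it is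
used to bound `dim Hom_K(H, H ⊗ S)` from below. -/
noncomputable def homToCoactionTensor (hK : IsLeftCoideal k (Subalgebra.toSubmodule K)) (e : H) :
    (H →ₗ[K] S) →ₗ[k] (H →ₗ[K] CoactionTensor S hK.coaction) where
  toFun ψ :=
    { toFun h := CoactionTensor.of hK.coaction
        ((ψ.restrictScalars k).lTensor H (comul h * (e ⊗ₜ 1)))
      map_add' h h' := by simp [add_mul]
      map_smul' x h := by
        rw [RingHom.id_apply, smul_of_lTensor, ← mul_assoc, ← Bialgebra.comul_mul]
        rfl }
  map_add' ψ ψ' := by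
    ext h
    simp [LinearMap.restrictScalars_add, LinearMap.lTensor_add]
  map_smul' c ψ := by
    ext h
    simp [LinearMap.restrictScalars_smul, LinearMap.lTensor_smul]

theorem homToCoactionTensor_apply (hK : IsLeftCoideal k (Subalgebra.toSubmodule K)) (e : H)
    (ψ : H →ₗ[K] S) (h : H) :
    hK.homToCoactionTensor e ψ h = CoactionTensor.of hK.coaction
      ((ψ.restrictScalars k).lTensor H (comul h * (e ⊗ₜ 1))) := rfl

theorem lsum_homToCoactionTensor_injective (hK : IsLeftCoideal k (Subalgebra.toSubmodule K))
    {ι : Type*} [Fintype ι] [DecidableEq ι] {b : ι → H} (hb : LinearIndependent k b) :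
    Function.Injective (LinearMap.lsum k (fun _ : ι => H →ₗ[K] S) k
      fun i => hK.homToCoactionTensor (b i)) := by
  rw [injective_iff_map_eq_zero]
  refine fun ψ hψ => funext fun i => LinearMap.ext fun h => ?_
  refine (Module.forall_dual_apply_eq_zero_iff k _).mp fun ω => ?_
  have hconv : toConv (LinearMap.id : H →ₗ[k] H) *
      toConv (∑ i, (ω ∘ₗ (ψ i).restrictScalars k).smulRight (b i)) = 0 := by
    ext h
    have hzero : ∑ i, TensorProduct.rid k H
        (ω.lTensor H (((ψ i).restrictScalars k).lTensor H (comul h * (b i ⊗ₜ 1)))) = 0 := by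
      simpa [homToCoactionTensor_apply] using congrArg
        (fun u => TensorProduct.rid k H (ω.lTensor H ((CoactionTensor.of _).symm u)))
        (LinearMap.congr_fun hψ h)
    simp_rw [← LinearMap.lTensor_comp_apply, rid_lTensor_comul_mul_tmul_one] at hzero
    rw [WithConv.toConv_sum, Finset.mul_sum]
    simpa [WithConv.ofConv_sum] using hzero
  have hsum := LinearMap.congr_fun (eq_zero_of_id_convMul_eq_zero hconv) h
  exact Fintype.linearIndependent_iff.mp hb (fun i => ω (ψ i h)) (by simpa using hsum) i

variable (S) in
theorem finrank_mul_finrank_linearMap_le [FiniteDimensional k H] [FiniteDimensional k S]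
    (hK : IsLeftCoideal k (Subalgebra.toSubmodule K)) :
    finrank k H * finrank k (H →ₗ[K] S) ≤ finrank k (H →ₗ[K] CoactionTensor S hK.coaction) := by
  have := finiteDimensional_linearMap (k := k) (A := K) (M := H) (T := S)
  have := finiteDimensional_linearMap (k := k) (A := K) (M := H)
    (T := CoactionTensor S hK.coaction)
  have hle := LinearMap.finrank_le_finrank_of_injective
    (hK.lsum_homToCoactionTensor_injective (S := S) (Module.finBasis k H).linearIndependent)
  simpa [Module.finrank_pi_fintype] using hle

theorem faithfulSMul_coactionTensor [FiniteDimensional k H]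
    (hK : IsLeftCoideal k (Subalgebra.toSubmodule K)) {ψ : H →ₗ[K] S} (hψ : ψ ≠ 0) :
    FaithfulSMul K (CoactionTensor S hK.coaction) := by
  let f : H →ₗ[k] H →ₗ[k] S := (LinearMap.mul k H).compr₂ (ψ.restrictScalars k)
  have hf_one : f 1 ≠ 0 := fun h0 => hψ (LinearMap.ext fun h => by
    simpa [f] using LinearMap.congr_fun h0 h)
  have hf_mul (y : H) (hy : y ∈ LinearMap.ker f) (h : H) : y * h ∈ LinearMap.ker f :=
    LinearMap.ext fun h' => by
      simpa [f, mul_assoc] using LinearMap.congr_fun hy (h * h')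
  refine ⟨fun {x y} hxy => Subtype.ext (sub_eq_zero.mp ?_)⟩
  refine eq_zero_of_comul_mem_ker_lTensor hf_mul hf_one ?_
  refine (lTensorHomEquivHomLTensor k H H S).injective (LinearMap.ext fun h => ?_)
  have := hxy (.of hK.coaction ((ψ.restrictScalars k).lTensor H (1 ⊗ₜ h)))
  rw [smul_of_lTensor, smul_of_lTensor] at this
  rw [lTensorHomEquivHomLTensor_apply, lTensorHomToHomLTensor_lTensor_compr₂_mul, map_sub, sub_mul,
    map_sub]
  simpa [sub_eq_zero] using this

end IsLeftCoideal

end Coaction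

theorem stmt_14_general (k H : Type*) [Field k] [Ring H] [HopfAlgebra k H] [FiniteDimensional k H]
    (K : Subalgebra k H) (hK : IsLeftCoideal k (Subalgebra.toSubmodule K)) :
    finrank k K ∣ finrank k H := by
  let ε : K →ₐ[k] k := (Bialgebra.counitAlgHom k H).comp K.val
  have : Nontrivial K := ε.toRingHom.domain_nontrivial
  obtain ⟨m, t, r, f, hm, hr, hdim, hf⟩ := exists_surjective_pi k K H
  let V := CoactionTensor (K ⧸ m) hK.coaction
  have : Nontrivial (K ⧸ m) := Submodule.Quotient.nontrivial_iff.mpr hm.ne_top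
  have := finiteDimensional_linearMap (k := k) (A := K) (M := H) (T := V)
  have : Nonempty (Fin r) := ⟨⟨0, hr⟩⟩
  have : Nontrivial H := (Bialgebra.counitAlgHom k H).toRingHom.domain_nontrivial
  have ht : 0 < t := Nat.pos_of_ne_zero fun ht => by
    subst ht
    exact not_subsingleton _ hf.subsingleton
  obtain ⟨ψ, hψ⟩ : ∃ ψ : H →ₗ[K] K ⧸ m, ψ ≠ 0 := by
    have hpos : 0 < r * finrank k (H →ₗ[K] K ⧸ m) := hdim ▸ Nat.mul_pos ht Module.finrank_pos
    have := Module.nontrivial_of_finrank_pos (Nat.pos_of_mul_pos_left hpos)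
    exact exists_ne 0
  have := hK.faithfulSMul_coactionTensor hψ
  have hle : Fintype.card (Fin t) * finrank k V ≤ finrank k ((Fin r → H) →ₗ[K] V) := calc
    Fintype.card (Fin t) * finrank k V = t * (finrank k H * finrank k (K ⧸ m)) := by
      rw [Fintype.card_fin, CoactionTensor.finrank_eq]
    _ = r * (finrank k H * finrank k (H →ₗ[K] K ⧸ m)) := by
      rw [mul_left_comm, hdim, mul_left_comm]
    _ ≤ r * finrank k (H →ₗ[K] V) := Nat.mul_le_mul_left r (hK.finrank_mul_finrank_linearMap_le _)
    _ = finrank k ((Fin r → H) →ₗ[K] V) := by rw [finrank_linearMap_pi, Fintype.card_fin]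
  exact finrank_dvd_of_linearEquiv_pi ε
    (LinearEquiv.ofBijective f ⟨injective_of_finrank_linearMap_le hf hle, hf⟩)

/-- The Nichols–Zoeller theorem: the dimension of a Hopf subalgebra of a finite-dimensional
Hopf algebra `H` divides the dimension of `H`. -/
theorem stmt_14 (k H : Type*) [Field k] [Ring H] [HopfAlgebra k H]
    [FiniteDimensional k H] (K : Subalgebra k H) (hK : IsHopfSubalgebra k K) :
    Module.finrank k K ∣ Module.finrank k H :=
  stmt_14_general k H K hK.isLeftCoideal
end
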